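/- arXiv:2309.12176 — 3 statements merged into one kernel-verified Lean document; each statement's English description precedes it below -/
import Mathlib

section
/- Let K be a commutative ring and f ∈ K[X] a polynomial. Let u ∈ K[z₁,z₂] be the divided difference of f, i.e., the unique polynomial satisfying (z₁ − z₂)·u = f(z₁) − f(z₂) (it exists and is unique since z₁ − z₂ is a nonzerodivisor in K[z₁,z₂]). Then (z₁ − z₂)⁴ · ( u · ∂₁∂₂u − (∂₁u)·(∂₂u) ) = f'(z₁) · f'(z₂) · (z₁ − z₂)² − (f(z₁) − f(z₂))², where f' is the formal derivative of f and ∂₁, ∂₂ denote partial derivatives with respect to z₁, z₂. -/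
open MvPolynomial

/-- Denominator-cleared form of the identity
`∂₁∂₂ log((f(z₁)-f(z₂))/(z₁-z₂)) = f'(z₁)f'(z₂)/(f(z₁)-f(z₂))² - 1/(z₁-z₂)²`:
if `u` is the divided difference of a polynomial `f`, i.e. `(z₁ - z₂)·u = f(z₁) - f(z₂)`,
then `(z₁-z₂)⁴ (u·∂₁∂₂u - ∂₁u·∂₂u) = f'(z₁)f'(z₂)(z₁-z₂)² - (f(z₁)-f(z₂))²`. -/
theorem divided_difference_log_identity (K : Type*) [CommRing K] (f : Polynomial K)
    (u : MvPolynomial (Fin 2) K)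
    (hu : ((X 0 : MvPolynomial (Fin 2) K) - X 1) * u =
      Polynomial.aeval (X 0 : MvPolynomial (Fin 2) K) f -
        Polynomial.aeval (X 1 : MvPolynomial (Fin 2) K) f) :
    ((X 0 : MvPolynomial (Fin 2) K) - X 1) ^ 4 *
        (u * pderiv 0 (pderiv 1 u) - pderiv 0 u * pderiv 1 u) =
      Polynomial.aeval (X 0 : MvPolynomial (Fin 2) K) f.derivative *
          Polynomial.aeval (X 1 : MvPolynomial (Fin 2) K) f.derivative *
          ((X 0 : MvPolynomial (Fin 2) K) - X 1) ^ 2 -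
        (Polynomial.aeval (X 0 : MvPolynomial (Fin 2) K) f -
          Polynomial.aeval (X 1 : MvPolynomial (Fin 2) K) f) ^ 2 := by
  have e1 := congrArg (pderiv (0 : Fin 2)) hu
  have e2 := congrArg (pderiv (1 : Fin 2)) hu
  have h01 : pderiv (0 : Fin 2) (X 1 : MvPolynomial (Fin 2) K) = 0 :=
    pderiv_X_of_ne (by decide)
  have h10 : pderiv (1 : Fin 2) (X 0 : MvPolynomial (Fin 2) K) = 0 :=
    pderiv_X_of_ne (by decide)
  simp only [Derivation.leibniz, map_sub, Derivation.map_aeval, pderiv_X_self, h01, h10,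
    smul_eq_mul, mul_one, mul_zero, sub_zero, zero_sub] at e1 e2
  have e3 := congrArg (pderiv (0 : Fin 2)) e2
  simp only [Derivation.leibniz, map_add, map_sub, map_neg, map_one, Derivation.map_aeval,
    pderiv_X_self, h01, Derivation.map_one_eq_zero,
    smul_eq_mul, mul_one, mul_zero, sub_zero, zero_sub, neg_zero, mul_neg, add_zero] at e3
  have hb : Polynomial.aeval (X 1 : MvPolynomial (Fin 2) K) f.derivative =
      u - (X 0 - X 1) * pderiv 1 u := by
    linear_combination e2
  rw [← hu, ← e1, hb]
  linear_combination (X 0 - X 1) ^ 3 * u * e3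
end

section
/- Let K be a commutative ring and f ∈ K[X] a polynomial. Then in K[z₁,z₂] the polynomial (z₁ − z₂)⁴ divides f'(z₁) · f'(z₂) · (z₁ − z₂)² − (f(z₁) − f(z₂))², where f' is the formal derivative and f(z₁), f(z₂) denote the evaluations of f at the two variables. -/
open MvPolynomial

theorem taylor_aux {K A : Type*} [CommRing K] [CommRing A] [Algebra K A] (x y : A)
    (f : Polynomial K) : ∃ g c d : A,
      Polynomial.aeval x f = Polynomial.aeval y f + Polynomial.aeval y f.derivative * (x - y)
        + g * (x - y) ^ 2 + c * (x - y) ^ 3 ∧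
      Polynomial.aeval x f.derivative = Polynomial.aeval y f.derivative
        + 2 * g * (x - y) + d * (x - y) ^ 2 := by
  induction f using Polynomial.induction_on with
  | C a => exact ⟨0, 0, 0, by simp, by simp⟩
  | add p q hp hq =>
    obtain ⟨g, c, d, h1, h2⟩ := hp
    obtain ⟨g', c', d', h1', h2'⟩ := hq
    refine ⟨g + g', c + c', d + d', ?_, ?_⟩
    · simp only [map_add, h1, h1']; ring
    · simp only [map_add, h2, h2']; ring
  | monomial n a ih =>
    obtain ⟨g, c, d, h1, h2⟩ := ih
    rw [pow_succ, ← mul_assoc]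
    generalize Polynomial.C a * Polynomial.X ^ n = p at *
    refine ⟨y * g + Polynomial.aeval y p.derivative, y * c + g + c * (x - y),
      3 * g + c * (x - y) + y * d + (x - y) * d, ?_, ?_⟩
    · simp only [Polynomial.derivative_mul, Polynomial.derivative_X, map_add, map_mul,
        Polynomial.aeval_X, map_one, h1]
      ring
    · simp only [Polynomial.derivative_mul, Polynomial.derivative_X, map_add, map_mul,
        Polynomial.aeval_X, map_one, h1, h2]
      ring

/-- Regularity of the difference of Bergman kernels along the diagonal, in polynomial form:
for any polynomial `f` over a commutative ring `K`, the polynomial `(z₁ - z₂)⁴` divides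
`f'(z₁) f'(z₂) (z₁ - z₂)² - (f(z₁) - f(z₂))²` in `K[z₁, z₂]`. -/
theorem bergman_difference_divisibility (K : Type*) [CommRing K] (f : Polynomial K) :
    ((X 0 : MvPolynomial (Fin 2) K) - X 1) ^ 4 ∣
      Polynomial.aeval (X 0 : MvPolynomial (Fin 2) K) f.derivative *
          Polynomial.aeval (X 1 : MvPolynomial (Fin 2) K) f.derivative *
          ((X 0 : MvPolynomial (Fin 2) K) - X 1) ^ 2 -
        (Polynomial.aeval (X 0 : MvPolynomial (Fin 2) K) f -
          Polynomial.aeval (X 1 : MvPolynomial (Fin 2) K) f) ^ 2 := by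
  obtain ⟨g, c, d, h1, h2⟩ := taylor_aux (X 0 : MvPolynomial (Fin 2) K) (X 1) f
  rw [h1, h2]
  generalize Polynomial.aeval (X 1 : MvPolynomial (Fin 2) K) f.derivative = u
  generalize (X 0 : MvPolynomial (Fin 2) K) - X 1 = h
  exact ⟨u * d - g ^ 2 - 2 * u * c - 2 * g * c * h - c ^ 2 * h ^ 2, by ring⟩
end

section
/- Let U ⊆ ℂ, let f : ℂ → ℂ, and let t₀, t₁, t₂ ∈ ℂ be pairwise distinct. If for each m ∈ {0,1,2} the function z ↦ (1 − t_m · f(z))² is meromorphic on U, then f is meromorphic on U. -/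
/-- If `(1 - t_m f)²` is meromorphic on `U` for three pairwise distinct values
`t₀, t₁, t₂`, then `f` is meromorphic on `U`. -/
theorem meromorphic_of_squares (U : Set ℂ) (f : ℂ → ℂ)
    (t : Fin 3 → ℂ) (ht : Function.Injective t)
    (h : ∀ m : Fin 3, MeromorphicOn (fun z => (1 - t m * f z) ^ 2) U) :
    MeromorphicOn f U := by
  intro x hx
  have h01 : t 0 - t 1 ≠ 0 := sub_ne_zero.2 (fun e => absurd (ht e) (by decide))
  have h02 : t 0 - t 2 ≠ 0 := sub_ne_zero.2 (fun e => absurd (ht e) (by decide))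
  have h12 : t 1 - t 2 ≠ 0 := sub_ne_zero.2 (fun e => absurd (ht e) (by decide))
  have key : f = fun z =>
      ((t 1 + t 2) * (t 1 - t 2) / (2 * ((t 0 - t 1) * (t 0 - t 2) * (t 1 - t 2))))
          * (1 - t 0 * f z) ^ 2
      + (-(t 0 + t 2) * (t 0 - t 2) / (2 * ((t 0 - t 1) * (t 0 - t 2) * (t 1 - t 2))))
          * (1 - t 1 * f z) ^ 2
      + ((t 0 + t 1) * (t 0 - t 1) / (2 * ((t 0 - t 1) * (t 0 - t 2) * (t 1 - t 2))))
          * (1 - t 2 * f z) ^ 2 := by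
    funext z
    field_simp
    ring
  rw [key]
  exact (((MeromorphicAt.const _ x).mul (h 0 x hx)).add
    ((MeromorphicAt.const _ x).mul (h 1 x hx))).add
    ((MeromorphicAt.const _ x).mul (h 2 x hx))
end
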